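/- Let $c > 0$, $k < 0$, $\rho_0 > 0$, $\omega = \sqrt{-ck}$, and suppose $u_0' \geq -(1 - \rho_0/c)\omega$. Then the function $\Gamma(t) = \dfrac{\rho_0}{c} + \dfrac{1}{2}\big(1 - \tfrac{\rho_0}{c} - \tfrac{u_0'}{\omega}\big) e^{-\omega t} + \dfrac{1}{2}\big(1 - \tfrac{\rho_0}{c} + \tfrac{u_0'}{\omega}\big) e^{\omega t}$ satisfies: $\rho_0/\Gamma(t) \to 0$ as $t \to \infty$ whenever $u_0' > -(1 - \rho_0/c)\omega$, and moreover in that case $e^{\omega t} \cdot \rho_0/\Gamma(t)$ converges to the finite limit $\dfrac{2\rho_0 \omega}{(1 - \rho_0/c)\omega + u_0'}$. -/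

import Mathlib

open Filter

/-!
The coefficient of `exp (ω * t)` in `Γ` is `((1 - ρ0 / c) * ω + u0') / (2 * ω)`, which vanishes
exactly at the threshold. Away from it, this mode dominates, so `exp (-(ω * t)) * Γ t` tends to a
nonzero limit; inverting gives the rescaled limit of the density, and hence its decay.
-/

open scoped Topology

section ExponentialRates

variable {ω : ℝ}

lemma tendsto_exp_neg_const_mul_atTop (hω : 0 < ω) :
    Tendsto (fun t : ℝ => Real.exp (-(ω * t))) atTop (𝓝 0) :=
  Real.tendsto_exp_neg_atTop_nhds_zero.comp (tendsto_id.const_mul_atTop hω)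

lemma tendsto_exp_neg_mul_add_exp_add_exp (hω : 0 < ω) (a b d : ℝ) :
    Tendsto
      (fun t => Real.exp (-(ω * t)) * (a + b * Real.exp (-(ω * t)) + d * Real.exp (ω * t)))
      atTop (𝓝 d) := by
  have hdecay := tendsto_exp_neg_const_mul_atTop hω
  have hsum : Tendsto (fun t => Real.exp (-(ω * t)) * (a + b * Real.exp (-(ω * t))) + d)
      atTop (𝓝 d) := by
    simpa using (hdecay.mul ((hdecay.const_mul b).const_add a)).add_const d
  refine hsum.congr fun t => ?_
  have hcancel : Real.exp (-(ω * t)) * Real.exp (ω * t) = 1 := by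
    rw [← Real.exp_add, neg_add_cancel, Real.exp_zero]
  linear_combination -d * hcancel

lemma tendsto_exp_mul_const_div_of_tendsto_exp_neg_mul {l : Filter ℝ} {g : ℝ → ℝ} {d : ℝ}
    (hg : Tendsto (fun t => Real.exp (-(ω * t)) * g t) l (𝓝 d)) (hd : d ≠ 0) (r : ℝ) :
    Tendsto (fun t => Real.exp (ω * t) * (r / g t)) l (𝓝 (r / d)) := by
  have hquot : Tendsto (fun t => r / (Real.exp (-(ω * t)) * g t)) l (𝓝 (r / d)) :=
    tendsto_const_nhds.div hg hd
  refine hquot.congr fun t => ?_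
  rw [Real.exp_neg, div_mul_eq_div_div_swap, div_inv_eq_mul, mul_comm]

lemma tendsto_zero_of_tendsto_exp_mul {f : ℝ → ℝ} {L : ℝ} (hω : 0 < ω)
    (hf : Tendsto (fun t => Real.exp (ω * t) * f t) atTop (𝓝 L)) :
    Tendsto f atTop (𝓝 0) := by
  have hprod := (tendsto_exp_neg_const_mul_atTop hω).mul hf
  rw [zero_mul] at hprod
  refine hprod.congr fun t => ?_
  rw [Real.exp_neg, inv_mul_cancel_left₀ (Real.exp_ne_zero _)]

end ExponentialRates

theorem density_decay_attractive_general
    (c k ρ0 u0' : ℝ) (hck : c * k < 0)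
    (ω : ℝ) (hω : ω = Real.sqrt (-(c * k)))
    (hthresh : u0' ≠ -(1 - ρ0 / c) * ω)
    (Γ : ℝ → ℝ)
    (hΓ : ∀ t, Γ t = ρ0 / c
        + 1 / 2 * (1 - ρ0 / c - u0' / ω) * Real.exp (-(ω * t))
        + 1 / 2 * (1 - ρ0 / c + u0' / ω) * Real.exp (ω * t)) :
    Tendsto (fun t => ρ0 / Γ t) atTop (𝓝 0) ∧
    Tendsto (fun t => Real.exp (ω * t) * (ρ0 / Γ t)) atTop
      (𝓝 (2 * ρ0 * ω / ((1 - ρ0 / c) * ω + u0'))) := by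
  have hω_pos : 0 < ω := hω ▸ Real.sqrt_pos.mpr (neg_pos.mpr hck)
  have hgap : (1 - ρ0 / c) * ω + u0' ≠ 0 := fun h => hthresh (by linear_combination h)
  have hcoeff : 1 / 2 * (1 - ρ0 / c + u0' / ω) = ((1 - ρ0 / c) * ω + u0') / (2 * ω) := by
    rw [eq_div_iff (by positivity)]
    linear_combination div_mul_cancel₀ u0' hω_pos.ne'
  have hΓ_growth : Tendsto (fun t => Real.exp (-(ω * t)) * Γ t) atTop
      (𝓝 (((1 - ρ0 / c) * ω + u0') / (2 * ω))) := by
    simpa only [hΓ, hcoeff] using tendsto_exp_neg_mul_add_exp_add_exp hω_pos _ _ _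
  have hrate : Tendsto (fun t => Real.exp (ω * t) * (ρ0 / Γ t)) atTop
      (𝓝 (2 * ρ0 * ω / ((1 - ρ0 / c) * ω + u0'))) := by
    convert tendsto_exp_mul_const_div_of_tendsto_exp_neg_mul hΓ_growth
      (div_ne_zero hgap (by positivity)) ρ0 using 2
    rw [div_div_eq_mul_div]
    ring
  exact ⟨tendsto_zero_of_tendsto_exp_mul hω_pos hrate, hrate⟩

theorem density_decay_attractive
    (c k ρ0 u0' : ℝ) (hc : 0 < c) (hk : k < 0) (hρ0 : 0 < ρ0)
    (ω : ℝ) (hω : ω = Real.sqrt (-(c * k)))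
    (hthresh : u0' ≥ -(1 - ρ0 / c) * ω)
    (Γ : ℝ → ℝ)
    (hΓ : ∀ t, Γ t = ρ0 / c
        + 1 / 2 * (1 - ρ0 / c - u0' / ω) * Real.exp (-(ω * t))
        + 1 / 2 * (1 - ρ0 / c + u0' / ω) * Real.exp (ω * t)) :
    (u0' > -(1 - ρ0 / c) * ω →
      Tendsto (fun t => ρ0 / Γ t) atTop (nhds 0)) ∧
    (u0' > -(1 - ρ0 / c) * ω →
      Tendsto (fun t => Real.exp (ω * t) * (ρ0 / Γ t)) atTop
        (nhds (2 * ρ0 * ω / ((1 - ρ0 / c) * ω + u0')))) :=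
  forall_and.mp fun h => density_decay_attractive_general c k ρ0 u0'
    (mul_neg_of_pos_of_neg hc hk) ω hω h.ne' Γ hΓ
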